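/- Fatou's normality theorem: Let a, b be holomorphic functions on a domain Ω ⊆ ℂⁿ with a(z) ≠ b(z) for every z ∈ Ω. Let 𝓕 be a family of holomorphic functions on Ω such that f(z) ≠ a(z) and f(z) ≠ b(z) for all f ∈ 𝓕 and all z ∈ Ω. Then 𝓕 is normal on Ω. -/

import Mathlib

open Filter Topology

abbrev Cn (n : ℕ) := EuclideanSpace ℂ (Fin n)

/-- Chordal (spherical) distance between two finite points of the Riemann sphere. -/
noncomputable def chordal (a b : ℂ) : ℝ :=
  dist a b / (Real.sqrt (1 + ‖a‖^2) * Real.sqrt (1 + ‖b‖^2))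

/-- Chordal distance between a finite point and ∞. -/
noncomputable def chordalInf (a : ℂ) : ℝ := 1 / Real.sqrt (1 + ‖a‖^2)

/-- Spherical derivative of a holomorphic function of several complex variables. -/
noncomputable def sphDeriv {E : Type} [NormedAddCommGroup E] [NormedSpace ℂ E]
    (f : E → ℂ) (z : E) : ℝ := ‖fderiv ℂ f z‖ / (1 + ‖f z‖^2)

/-- A family `F` of (holomorphic) functions is normal on `Ω`: every sequence from `F`
has a subsequence which converges uniformly on compact subsets of `Ω` in the spherical
metric, either to a holomorphic function or to ∞. -/
def IsNormalFamily {E : Type} [NormedAddCommGroup E] [NormedSpace ℂ E]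
    (Ω : Set E) (F : Set (E → ℂ)) : Prop :=
  ∀ s : ℕ → E → ℂ, (∀ j, s j ∈ F) →
    ∃ φ : ℕ → ℕ, StrictMono φ ∧
      ((∃ g : E → ℂ, DifferentiableOn ℂ g Ω ∧
          ∀ K, K ⊆ Ω → IsCompact K → ∀ ε > 0, ∃ N, ∀ j ≥ N, ∀ z ∈ K,
            chordal (s (φ j) z) (g z) < ε) ∨
        (∀ K, K ⊆ Ω → IsCompact K → ∀ M : ℝ, ∃ N, ∀ j ≥ N, ∀ z ∈ K, M < ‖s (φ j) z‖))


lemma bloch_local {F : ℂ → ℂ} {p : ℂ} {s A : ℝ} (hs : 0 < s)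
    (hd : DifferentiableOn ℂ F (Metric.ball p s)) (hA0 : 0 < A) (hA : ‖deriv F p‖ = A)
    (hbd : ∀ z ∈ Metric.ball p s, ‖deriv F z‖ ≤ 2 * A) :
    Metric.ball (F p) (A * s / 28) ⊆ F '' Metric.ball p s := by
  have hd' : DifferentiableOn ℂ (deriv F) (Metric.ball p s) := hd.deriv Metric.isOpen_ball
  have hm : Set.MapsTo (deriv F) (Metric.ball p s) (Metric.closedBall (deriv F p) (3 * A)) := by
    intro z hz
    rw [Metric.mem_closedBall, dist_eq_norm]
    calc _ ≤ ‖deriv F z‖ + ‖deriv F p‖ := norm_sub_le _ _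
      _ ≤ 2 * A + A := add_le_add (hbd z hz) hA.le
      _ = _ := by ring
  have hsub : Metric.closedBall p (s / 7) ⊆ Metric.ball p s :=
    Metric.closedBall_subset_ball (by linarith)
  have key : ∀ z ∈ Metric.closedBall p (s / 7), ‖deriv F z - deriv F p‖ ≤ A / 2 := by
    intro z hz
    have h := Complex.dist_le_div_mul_dist_of_mapsTo_ball hd' hm (hsub hz)
    rw [dist_eq_norm] at h
    have hz' : dist z p ≤ s / 7 := hz
    calc _ ≤ _ := h
      _ ≤ 3 * A / s * (s / 7) := by gcongr
      _ = 3 * A / 7 := by field_simp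
      _ ≤ A / 2 := by linarith
  have hda : ∀ z ∈ Metric.ball p s, HasDerivAt F (deriv F z) z := fun z hz =>
    (hd.differentiableAt (Metric.isOpen_ball.mem_nhds hz)).hasDerivAt
  have lip : ∀ z ∈ Metric.closedBall p (s / 7),
      ‖(F z - deriv F p * z) - (F p - deriv F p * p)‖ ≤ A / 2 * ‖z - p‖ := by
    intro z hz
    refine (convex_closedBall p (s/7)).norm_image_sub_le_of_norm_hasDerivWithin_le
      (f := fun z => F z - deriv F p * z) (f' := fun z => deriv F z - deriv F p) ?_ key
      (Metric.mem_closedBall_self (by positivity)) hz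
    intro x hx
    have := (hda x (hsub hx)).fun_sub ((hasDerivAt_id x).const_mul (deriv F p))
    simpa using this.hasDerivWithinAt
  have hp : p ∈ Metric.ball p s := Metric.mem_ball_self hs
  have h := DiffContOnCl.ball_subset_image_closedBall (f := F) (z₀ := p) (r := s / 7)
    (ε := A * s / 14) ?_ (by positivity) ?_ ?_
  · have e : A * s / 14 / 2 = A * s / 28 := by ring
    rw [e] at h
    exact h.trans (Set.image_mono hsub)
  · exact (hd.mono ((Metric.closure_ball_subset_closedBall).trans hsub)).diffContOnCl
  · intro z hz
    have hz1 : ‖z - p‖ = s / 7 := by simpa [dist_eq_norm] using hz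
    have h1 := lip z (Metric.sphere_subset_closedBall hz)
    have h2 : ‖deriv F p * (z - p)‖ = A * (s / 7) := by rw [norm_mul, hA, hz1]
    have h3 : ‖deriv F p * (z - p)‖ ≤ ‖F z - F p‖ +
        ‖(F z - deriv F p * z) - (F p - deriv F p * p)‖ := by
      have : deriv F p * (z - p) = (F z - F p) -
        ((F z - deriv F p * z) - (F p - deriv F p * p)) := by ring
      rw [this]; exact norm_sub_le _ _
    rw [hz1] at h1
    linarith
  · have hne : deriv F p ≠ 0 := by
      intro h0; rw [h0, norm_zero] at hA; linarith
    have := (hda p hp).eventually_ne (c := F p) hne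
    exact this.frequently.filter_mono nhdsWithin_le_nhds

lemma bloch {F : ℂ → ℂ} {z0 : ℂ} {R : ℝ} (hR : 0 < R)
    (hd : DifferentiableOn ℂ F (Metric.ball z0 R))
    (hom : ∀ w, ∃ q ∈ Metric.ball w 2, q ∉ F '' Metric.ball z0 R) :
    ‖deriv F z0‖ * R ≤ 224 := by
  by_contra! hcon
  set r := R / 2 with hr
  have hr0 : 0 < r := by positivity
  have hsub : Metric.closedBall z0 r ⊆ Metric.ball z0 R :=
    Metric.closedBall_subset_ball (by linarith)
  have hc : ContinuousOn (fun z => ‖deriv F z‖ * (r - dist z z0)) (Metric.closedBall z0 r) := by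
    have := ((hd.deriv Metric.isOpen_ball).continuousOn.mono hsub).norm
    exact this.mul (by fun_prop)
  obtain ⟨p, hp, hmax⟩ := (isCompact_closedBall z0 r).exists_isMaxOn
    ⟨z0, Metric.mem_closedBall_self hr0.le⟩ hc
  have h0 : ‖deriv F z0‖ * r ≤ ‖deriv F p‖ * (r - dist p z0) := by
    have := hmax (Metric.mem_closedBall_self hr0.le)
    simpa using this
  have hpos : 112 < ‖deriv F p‖ * (r - dist p z0) := by
    have : ‖deriv F z0‖ * R = 2 * (‖deriv F z0‖ * r) := by rw [hr]; ring
    linarith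
  have hpr : dist p z0 ≤ r := hp
  have hA0 : 0 < ‖deriv F p‖ := by
    rcases (norm_nonneg (deriv F p)).eq_or_lt with h | h
    · rw [← h] at hpos; linarith
    · exact h
  have hs0 : 0 < r - dist p z0 := by
    rcases (sub_nonneg.2 hpr).eq_or_lt with h | h
    · rw [← h] at hpos; linarith
    · exact h
  set s := (r - dist p z0) / 2 with hs
  have hball : Metric.ball p s ⊆ Metric.closedBall z0 r := by
    intro z hz
    have h1 : dist z p < s := hz
    have := dist_triangle z p z0
    rw [Metric.mem_closedBall]; linarith
  have h := bloch_local (A := ‖deriv F p‖) (s := s) (by positivity)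
    (hd.mono (hball.trans hsub)) hA0 rfl ?_
  · obtain ⟨q, hq, hq'⟩ := hom (F p)
    refine hq' (Set.image_mono (hball.trans hsub) (h (Metric.ball_subset_ball ?_ hq)))
    rw [hs]; linarith
  · intro z hz
    have h1 : dist z p < s := hz
    have h2 : ‖deriv F z‖ * (r - dist z z0) ≤ ‖deriv F p‖ * (r - dist p z0) := hmax (hball hz)
    have h3 := dist_triangle z p z0
    have h4 : s ≤ r - dist z z0 := by linarith
    have h5 : ‖deriv F z‖ * s ≤ ‖deriv F p‖ * (2 * s) := by
      calc _ ≤ ‖deriv F z‖ * (r - dist z z0) := by gcongr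
        _ ≤ _ := h2
        _ = _ := by rw [hs]; ring
    have hs1 : 0 < s := by positivity
    exact le_of_mul_le_mul_right (by linarith : _ ≤ 2 * ‖deriv F p‖ * s) hs1

lemma exists_log_ball {f : ℂ → ℂ} (hd : DifferentiableOn ℂ f (Metric.ball 0 1))
    (h0 : ∀ z ∈ Metric.ball (0:ℂ) 1, f z ≠ 0) :
    ∃ g : ℂ → ℂ, DifferentiableOn ℂ g (Metric.ball 0 1) ∧
      ∀ z ∈ Metric.ball (0:ℂ) 1, Complex.exp (g z) = f z := by
  have hm : (0:ℂ) ∈ Metric.ball (0:ℂ) 1 := Metric.mem_ball_self one_pos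
  have hq : DifferentiableOn ℂ (fun z => deriv f z / f z) (Metric.ball 0 1) :=
    (hd.deriv Metric.isOpen_ball).fun_div hd h0
  obtain ⟨g, hg0, hg⟩ := hq.isExactOn_ball.with_val_at 0 (Complex.log (f 0))
  refine ⟨g, fun z hz => (hg z hz).differentiableAt.differentiableWithinAt, fun z hz => ?_⟩
  have hda : ∀ z ∈ Metric.ball (0:ℂ) 1, HasDerivAt f (deriv f z) z := fun z hz =>
    (hd.differentiableAt (Metric.isOpen_ball.mem_nhds hz)).hasDerivAt
  have hder : ∀ x ∈ Metric.ball (0:ℂ) 1,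
      HasDerivWithinAt (fun z => Complex.exp (g z) / f z) 0 (Metric.ball 0 1) x := by
    intro x hx
    have := (hg x hx).cexp.fun_div (hda x hx) (h0 x hx)
    have hne := h0 x hx
    have e : Complex.exp (g x) * (deriv f x / f x) * f x = Complex.exp (g x) * deriv f x := by
      rw [mul_assoc, div_mul_cancel₀ _ hne]
    rw [e, sub_self, zero_div] at this
    exact this.hasDerivWithinAt
  have := (convex_ball (0:ℂ) 1).norm_image_sub_le_of_norm_hasDerivWithin_le hder
    (C := 0) (by simp) hm hz
  simp only [zero_mul, norm_le_zero_iff, hg0, Complex.exp_log (h0 0 hm), div_self (h0 0 hm)] at this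
  have h1 := sub_eq_zero.1 this
  exact (div_eq_one_iff_eq (h0 z hz)).1 h1

lemma abs_im_le_norm_cos (w : ℂ) : |w.im| ≤ ‖Complex.cos w‖ := by
  have h1 : |w.im| ≤ Real.sinh |w.im| := Real.self_le_sinh_iff.2 (abs_nonneg _)
  refine h1.trans ?_
  have h2 : Complex.cos w = (Complex.exp (w * Complex.I) + Complex.exp (-w * Complex.I)) / 2 := rfl
  have n1 : ‖Complex.exp (w * Complex.I)‖ = Real.exp (-w.im) := by
    rw [Complex.norm_exp]; simp
  have n2 : ‖Complex.exp (-w * Complex.I)‖ = Real.exp (w.im) := by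
    rw [Complex.norm_exp]; simp
  rw [h2, norm_div, Real.sinh_eq]
  simp only [Complex.norm_ofNat]
  gcongr
  rcases le_total 0 w.im with h | h
  · rw [abs_of_nonneg h, ← n1, ← n2, add_comm]
    exact norm_sub_le_norm_add _ _
  · rw [abs_of_nonpos h, neg_neg, ← n1, ← n2]
    exact norm_sub_le_norm_add _ _

lemma norm_cos_le_exp (w : ℂ) : ‖Complex.cos w‖ ≤ Real.exp ‖w‖ := by
  have h2 : Complex.cos w = (Complex.exp (w * Complex.I) + Complex.exp (-w * Complex.I)) / 2 := rfl
  have n1 : ‖Complex.exp (w * Complex.I)‖ ≤ Real.exp ‖w‖ := by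
    have := Complex.norm_exp_le_exp_norm (w * Complex.I); simpa using this
  have n2 : ‖Complex.exp (-w * Complex.I)‖ ≤ Real.exp ‖w‖ := by
    have := Complex.norm_exp_le_exp_norm (-w * Complex.I); simpa using this
  rw [h2, norm_div]
  have := norm_add_le (Complex.exp (w * Complex.I)) (Complex.exp (-w * Complex.I))
  simp only [Complex.norm_ofNat]
  linarith

lemma exists_cos_ball {f : ℂ → ℂ} (hd : DifferentiableOn ℂ f (Metric.ball 0 1))
    (h1 : ∀ z ∈ Metric.ball (0:ℂ) 1, f z ≠ 1) (h2 : ∀ z ∈ Metric.ball (0:ℂ) 1, f z ≠ -1) :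
    ∃ F : ℂ → ℂ, DifferentiableOn ℂ F (Metric.ball 0 1) ∧
      (∀ z ∈ Metric.ball (0:ℂ) 1, Complex.cos (Real.pi * F z) = f z) ∧ ‖F 0‖ ≤ 1 + ‖f 0‖ := by
  have hm : (0:ℂ) ∈ Metric.ball (0:ℂ) 1 := Metric.mem_ball_self one_pos
  obtain ⟨u, hu, hue⟩ := exists_log_ball (f := fun z => f z ^ 2 - 1) (by fun_prop) (by
    intro z hz h
    have : (f z - 1) * (f z + 1) = 0 := by linear_combination h
    rcases mul_eq_zero.1 this with h | h
    · exact h1 z hz (sub_eq_zero.1 h)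
    · exact h2 z hz (eq_neg_of_add_eq_zero_left h))
  have hq : ∀ z ∈ Metric.ball (0:ℂ) 1, (f z + Complex.exp (u z / 2)) *
      (f z - Complex.exp (u z / 2)) = 1 := by
    intro z hz
    have e : Complex.exp (u z / 2) * Complex.exp (u z / 2) = f z ^ 2 - 1 := by
      rw [← Complex.exp_add, add_halves, hue z hz]
    linear_combination -e
  obtain ⟨v, hv, hve⟩ := exists_log_ball (f := fun z => f z + Complex.exp (u z / 2))
    (by fun_prop) (fun z hz h => by
      have := hq z hz
      simp only [h, zero_mul] at this
      exact zero_ne_one this)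
  have hpi : (Real.pi : ℂ) ≠ 0 := by exact_mod_cast Real.pi_ne_zero
  have hcos : ∀ z ∈ Metric.ball (0:ℂ) 1,
      Complex.cos (Real.pi * (v z / (Real.pi * Complex.I))) = f z := by
    intro z hz
    have e1 : (Real.pi : ℂ) * (v z / (Real.pi * Complex.I)) * Complex.I = v z := by
      field_simp
    have e3 : Complex.exp (v z) * Complex.exp (- v z) = 1 := by
      rw [← Complex.exp_add]; simp
    have e4 : Complex.exp (- v z) = f z - Complex.exp (u z / 2) := by
      have hne := Complex.exp_ne_zero (v z)
      apply mul_left_cancel₀ hne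
      rw [e3, hve z hz, hq z hz]
    rw [Complex.cos, e1, neg_mul, e1, e4, hve z hz]
    ring
  set F0 : ℂ → ℂ := fun z => v z / (Real.pi * Complex.I) with hF0
  set k : ℤ := round ((F0 0).re / 2) with hk
  have hcos' : ∀ z ∈ Metric.ball (0:ℂ) 1,
      Complex.cos (Real.pi * (F0 z - k * 2)) = f z := by
    intro z hz
    rw [← hcos z hz, ← Complex.cos_sub_int_mul_two_pi (Real.pi * (v z / (Real.pi * Complex.I))) k]
    congr 1; simp only [hF0]; ring
  refine ⟨fun z => F0 z - k * 2, by fun_prop, hcos', ?_⟩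
  have hre : |(F0 0 - k * 2).re| ≤ 1 := by
    have := abs_sub_round ((F0 0).re / 2)
    rw [← hk] at this
    have e : (F0 0 - k * 2).re = 2 * ((F0 0).re / 2 - k) := by
      simp; ring
    rw [e, abs_mul, abs_two]; linarith
  have him : |(F0 0 - k * 2).im| ≤ ‖f 0‖ := by
    have := abs_im_le_norm_cos (Real.pi * (F0 0 - k * 2))
    rw [hcos' 0 hm] at this
    refine le_trans ?_ this
    rw [Complex.im_ofReal_mul, abs_mul, abs_of_pos Real.pi_pos]
    have := Real.pi_gt_three
    nlinarith [abs_nonneg (F0 0 - k * 2).im]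
  calc _ ≤ _ := Complex.norm_le_abs_re_add_abs_im _
    _ ≤ _ := add_le_add hre him

lemma net_upper (x y : ℝ) (hy : 0 ≤ y) : ∃ (q : ℂ) (k : ℤ), Complex.cos (Real.pi * q) = k ∧
    ‖q - ⟨x, y⟩‖ < 2 := by
  obtain ⟨t, ht, hte⟩ : ∃ t ∈ Set.Icc y (y+1), Real.cosh (Real.pi * t) = (⌈Real.cosh (Real.pi * y)⌉ : ℝ) := by
    have hc : ContinuousOn (fun t => Real.cosh (Real.pi * t)) (Set.Icc y (y+1)) := by fun_prop
    have := intermediate_value_Icc (by linarith : y ≤ y + 1) hc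
    apply this
    refine ⟨Int.le_ceil _, (Int.ceil_lt_add_one _).le.trans ?_⟩
    have hpi := Real.pi_gt_three
    rw [mul_add, Real.cosh_add]
    have a1 := Real.one_le_cosh (Real.pi * y)
    have a2 : 0 ≤ Real.sinh (Real.pi * y) := Real.sinh_nonneg_iff.2 (by positivity)
    have a3 : Real.pi * 1 ≤ Real.sinh (Real.pi * 1) := Real.self_le_sinh_iff.2 (by positivity)
    have a4 : Real.sinh (Real.pi * 1) < Real.cosh (Real.pi * 1) := Real.sinh_lt_cosh _
    nlinarith [mul_nonneg a2 (by linarith : 0 ≤ Real.sinh (Real.pi * 1))]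
  set m : ℤ := round x with hmdef
  obtain ⟨j, c0⟩ : ∃ j : ℤ, Complex.cos (m * Real.pi) = j := by
    obtain ⟨k, hk | hk⟩ := m.even_or_odd'
    · refine ⟨1, ?_⟩
      have := Complex.cos_add_int_mul_two_pi 0 k
      rw [hk]
      convert this using 2 <;> simp
      ring
    · refine ⟨-1, ?_⟩
      have := Complex.cos_add_int_mul_two_pi Real.pi k
      rw [hk]
      convert this using 2
      · push_cast; ring
      · simp
  refine ⟨m + t * Complex.I, j * ⌈Real.cosh (Real.pi * y)⌉, ?_, ?_⟩
  · have e : (Real.pi : ℂ) * (m + t * Complex.I) = m * Real.pi + ((Real.pi * t : ℝ) : ℂ) * Complex.I := by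
      push_cast; ring
    have s0 : Complex.sin (m * Real.pi) = 0 := Complex.sin_int_mul_pi m
    rw [e, Complex.cos_add_mul_I, s0, c0, ← Complex.ofReal_cosh, hte]
    push_cast; ring
  · refine (Complex.norm_le_abs_re_add_abs_im _).trans_lt ?_
    have b1 : |x - m| ≤ 1/2 := abs_sub_round x
    have b2 : |t - y| ≤ 1 := by rw [abs_le]; constructor <;> linarith [ht.1, ht.2]
    rw [abs_sub_comm] at b1
    simp
    linarith

lemma net (w : ℂ) : ∃ q ∈ Metric.ball w 2, ∃ k : ℤ, Complex.cos (Real.pi * q) = k := by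
  rcases le_total 0 w.im with h | h
  · obtain ⟨q, k, h1, h2⟩ := net_upper w.re w.im h
    exact ⟨q, by rw [Metric.mem_ball, dist_eq_norm]; exact h2, k, h1⟩
  · obtain ⟨q, k, h1, h2⟩ := net_upper (-w.re) (-w.im) (by linarith)
    refine ⟨-q, ?_, k, by rw [mul_neg, Complex.cos_neg, h1]⟩
    rw [Metric.mem_ball, dist_eq_norm, ← norm_neg]
    have : -(-q - w) = q - ⟨-w.re, -w.im⟩ := by
      apply Complex.ext <;> simp <;> ring
    rw [this]; exact h2

lemma schottky_disc {f : ℂ → ℂ} {M : ℝ} (hd : DifferentiableOn ℂ f (Metric.ball 0 1))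
    (h0 : ∀ z ∈ Metric.ball (0:ℂ) 1, f z ≠ 0) (h1 : ∀ z ∈ Metric.ball (0:ℂ) 1, f z ≠ 1)
    (hM : ‖f 0‖ ≤ M) {z : ℂ} (hz : ‖z‖ ≤ 1 / 2) :
    ‖f z‖ ≤ 1 + Real.exp (Real.pi * Real.exp (Real.pi * (227 + 2 * M))) := by
  have hm : (0:ℂ) ∈ Metric.ball (0:ℂ) 1 := Metric.mem_ball_self one_pos
  obtain ⟨G, hG, hGe, hG0⟩ := exists_cos_ball (f := fun z => 2 * f z - 1) (by fun_prop)
    (fun z hz h => h1 z hz (by linear_combination h / 2))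
    (fun z hz h => h0 z hz (by linear_combination h / 2))
  have hint : ∀ z ∈ Metric.ball (0:ℂ) 1, ∀ k : ℤ, G z ≠ k := by
    intro z hz k hk
    have h := hGe z hz
    have hs : Complex.sin (Real.pi * G z) = 0 := by
      rw [hk, mul_comm]; exact Complex.sin_int_mul_pi k
    have := Complex.sin_sq_add_cos_sq (Real.pi * G z)
    rw [hs, h] at this
    have h2 : f z * (f z - 1) = 0 := by linear_combination this / 4
    rcases mul_eq_zero.1 h2 with h | h
    · exact h0 z hz h
    · exact h1 z hz (sub_eq_zero.1 h)
  obtain ⟨F, hF, hFe, hF0⟩ := exists_cos_ball hG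
    (fun z hz h => hint z hz 1 (by simpa using h))
    (fun z hz h => hint z hz (-1) (by simpa using h))
  have hF0' : ‖F 0‖ ≤ 3 + 2 * M := by
    have : ‖2 * f 0 - 1‖ ≤ 2 * ‖f 0‖ + 1 := by
      refine (norm_sub_le _ _).trans ?_
      simp
    linarith
  have hder : ∀ x ∈ Metric.closedBall (0:ℂ) (1/2), ‖deriv F x‖ ≤ 448 := by
    intro x hx
    have hx' : dist x 0 ≤ 1 / 2 := hx
    have hsub : Metric.ball x (1/2) ⊆ Metric.ball 0 1 := Metric.ball_subset_ball' (by linarith)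
    have := bloch (F := F) (z0 := x) (R := 1/2) (by norm_num) (hF.mono hsub) (by
      intro w
      obtain ⟨q, hq, k, hk⟩ := net w
      refine ⟨q, hq, ?_⟩
      rintro ⟨y, hy, rfl⟩
      exact hint y (hsub hy) k ((hFe y (hsub hy)).symm.trans hk))
    linarith
  have hzm : z ∈ Metric.closedBall (0:ℂ) (1/2) := by simpa using hz
  have hsub : Metric.closedBall (0:ℂ) (1/2) ⊆ Metric.ball 0 1 :=
    Metric.closedBall_subset_ball (by norm_num)
  have hFz : ‖F z‖ ≤ 227 + 2 * M := by
    have := (convex_closedBall (0:ℂ) (1/2)).norm_image_sub_le_of_norm_deriv_le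
      (fun x hx => hF.differentiableAt (Metric.isOpen_ball.mem_nhds (hsub hx))) hder
      (Metric.mem_closedBall_self (by norm_num)) hzm
    rw [sub_zero] at this
    have h3 := norm_sub_norm_le (F z) (F 0)
    linarith
  have hpi : ∀ w : ℂ, ‖(Real.pi : ℂ) * w‖ = Real.pi * ‖w‖ := fun w => by
    rw [norm_mul, Complex.norm_real, Real.norm_of_nonneg Real.pi_pos.le]
  have hGz : ‖G z‖ ≤ Real.exp (Real.pi * (227 + 2 * M)) := by
    rw [← hFe z (hsub hzm)]
    refine (norm_cos_le_exp _).trans (Real.exp_le_exp.2 ?_)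
    rw [hpi]
    exact mul_le_mul_of_nonneg_left hFz Real.pi_pos.le
  have h2f : ‖2 * f z - 1‖ ≤ Real.exp (Real.pi * Real.exp (Real.pi * (227 + 2 * M))) := by
    rw [← hGe z (hsub hzm)]
    refine (norm_cos_le_exp _).trans (Real.exp_le_exp.2 ?_)
    rw [hpi]
    exact mul_le_mul_of_nonneg_left hGz Real.pi_pos.le
  have h4 : ‖2 * f z‖ ≤ ‖2 * f z - 1‖ + ‖(1:ℂ)‖ := by
    have := norm_add_le (2 * f z - 1) 1
    simpa using this
  rw [norm_mul, norm_one, Complex.norm_ofNat] at h4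
  have := Real.exp_pos (Real.pi * Real.exp (Real.pi * (227 + 2 * M)))
  linarith

/-- Schottky's theorem on balls of a complex normed space. -/
lemma schottky {E : Type} [NormedAddCommGroup E] [NormedSpace ℂ E] (M : ℝ) :
    ∃ C : ℝ, ∀ (h : E → ℂ) (z : E) (R : ℝ), DifferentiableOn ℂ h (Metric.ball z R) →
      (∀ w ∈ Metric.ball z R, h w ≠ 0) → (∀ w ∈ Metric.ball z R, h w ≠ 1) → ‖h z‖ ≤ M →
      ∀ w ∈ Metric.ball z (R / 2), ‖h w‖ ≤ C := by
  refine ⟨1 + Real.exp (Real.pi * Real.exp (Real.pi * (227 + 2 * M))), fun h z R hd h0 h1 hM w hw => ?_⟩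
  have hw' : ‖w - z‖ < R / 2 := by rw [← dist_eq_norm]; exact hw
  have hmap : Set.MapsTo (fun t : ℂ => z + (2 * t) • (w - z)) (Metric.ball 0 1) (Metric.ball z R) := by
    intro t ht
    have ht' : ‖t‖ < 1 := by simpa using ht
    rw [Metric.mem_ball, dist_eq_norm, add_sub_cancel_left, norm_smul, norm_mul, Complex.norm_ofNat]
    nlinarith [norm_nonneg (w - z), norm_nonneg t]
  have := schottky_disc (f := fun t : ℂ => h (z + (2 * t) • (w - z))) (M := M) (z := 1/2)
    (hd.comp (by fun_prop) hmap) (fun t ht => h0 _ (hmap ht)) (fun t ht => h1 _ (hmap ht))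
    (by simpa using hM) (by simp)
  simpa using this

/-- Locally uniform limits of holomorphic functions are holomorphic. -/
lemma differentiableOn_of_locallyUniform {E : Type} [NormedAddCommGroup E] [NormedSpace ℂ E]
    [FiniteDimensional ℂ E]
    {Ω : Set E} (hΩ : IsOpen Ω) {H : ℕ → E → ℂ} {g : E → ℂ}
    (hd : ∀ j, DifferentiableOn ℂ (H j) Ω) (hl : TendstoLocallyUniformlyOn H g atTop Ω) :
    DifferentiableOn ℂ g Ω := by
  have := FiniteDimensional.proper ℂ E
  intro z hz
  rw [tendstoLocallyUniformlyOn_iff_forall_isCompact hΩ] at hl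
  obtain ⟨R, hR, hRΩ⟩ := Metric.isOpen_iff.1 hΩ z hz
  set r := R / 4 with hrdef
  have hr : 0 < r := by positivity
  have hsub : Metric.closedBall z (2 * r) ⊆ Ω :=
    (Metric.closedBall_subset_ball (by linarith)).trans hRΩ
  have hu := hl _ hsub (isCompact_closedBall _ _)
  have huc := hu.uniformCauchySeqOn
  have hsubx : ∀ x ∈ Metric.ball z r, Metric.ball x r ⊆ Metric.closedBall z (2 * r) := by
    intro x hx
    rw [Metric.mem_ball] at hx
    exact (Metric.ball_subset_ball' (by linarith)).trans Metric.ball_subset_closedBall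
  have hda : ∀ j, ∀ x ∈ Metric.ball z r, DifferentiableAt ℂ (H j) x := fun j x hx =>
    (hd j).differentiableAt (hΩ.mem_nhds (hsub (hsubx x hx (Metric.mem_ball_self hr))))
  have hfc : UniformCauchySeqOn (fun j x => fderiv ℂ (H j) x) atTop (Metric.ball z r) := by
    rw [Metric.uniformCauchySeqOn_iff] at huc ⊢
    intro ε hε
    obtain ⟨N, hN⟩ := huc (ε * r / 4) (by positivity)
    refine ⟨N, fun m hm n hn x hx => ?_⟩
    rw [dist_eq_norm, ← fderiv_fun_sub (hda m x hx) (hda n x hx)]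
    have hb : ∀ y ∈ Metric.ball x r, ‖H m y - H n y‖ ≤ ε * r / 4 := fun y hy => by
      rw [← dist_eq_norm]; exact (hN m hm n hn y (hsubx x hx hy)).le
    have := Complex.norm_fderiv_le_div_of_mapsTo_ball (f := fun y => H m y - H n y) (c := x)
      (R₁ := r) (R₂ := ε * r / 2)
      (((hd m).mono ((hsubx x hx).trans hsub)).fun_sub ((hd n).mono ((hsubx x hx).trans hsub)))
      (by
        intro y hy
        rw [Metric.mem_closedBall, dist_eq_norm]
        have h1 := hb y hy
        have h2 := hb x (Metric.mem_ball_self hr)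
        exact (norm_sub_le _ _).trans (by linarith)) hr
    calc _ ≤ _ := this
      _ = ε / 2 := by field_simp
      _ < ε := by linarith
  have hpt : ∀ x ∈ Metric.ball z r, ∃ L, Tendsto (fun j => fderiv ℂ (H j) x) atTop (𝓝 L) :=
    fun x hx => cauchySeq_tendsto_of_complete (hfc.cauchySeq hx)
  choose! g' hg' using hpt
  have htu := hfc.tendstoUniformlyOn_of_tendsto hg'
  have := hasFDerivAt_of_tendstoUniformlyOn (𝕜 := ℂ) (g := g) Metric.isOpen_ball htu
    (fun n x hx => (hda n x hx).hasFDerivAt)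
    (fun x hx => hu.tendsto_at (hsubx x hx (Metric.mem_ball_self hr)))
    (Metric.mem_ball_self hr)
  exact this.differentiableAt.differentiableWithinAt

lemma local_lip {E : Type} [NormedAddCommGroup E] [NormedSpace ℂ E]
    {H : ℕ → E → ℂ} {z : E} {r B : ℝ} (hr : 0 < r)
    (hd : ∀ j, DifferentiableOn ℂ (H j) (Metric.ball z (2 * r)))
    (hB : ∀ j, ∀ x ∈ Metric.ball z (2 * r), ‖H j x‖ ≤ B) :
    ∀ j, ∀ x ∈ Metric.ball z (r / 2), ∀ y ∈ Metric.ball z (r / 2),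
      dist (H j x) (H j y) ≤ 2 * B / r * dist x y := by
  intro j x hx y hy
  rw [Metric.mem_ball] at hx hy
  have hsub : Metric.ball y r ⊆ Metric.ball z (2 * r) := Metric.ball_subset_ball' (by linarith)
  refine Complex.dist_le_div_mul_dist_of_mapsTo_ball (c := y) (R₁ := r) ((hd j).mono hsub) ?_ ?_
  · intro w hw
    rw [Metric.mem_closedBall, dist_eq_norm]
    have h1 := hB j w (hsub hw)
    have h2 := hB j y (hsub (Metric.mem_ball_self hr))
    exact (norm_sub_le _ _).trans (by linarith)
  · rw [Metric.mem_ball]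
    have := dist_triangle_right x y z
    linarith

lemma montel_bounded {E : Type} [NormedAddCommGroup E] [NormedSpace ℂ E]
    [FiniteDimensional ℂ E]
    {Ω : Set E} (hΩ : IsOpen Ω) {H : ℕ → E → ℂ}
    (hd : ∀ j, DifferentiableOn ℂ (H j) Ω)
    (hb : ∀ z ∈ Ω, ∃ r > 0, ∃ B, Metric.ball z r ⊆ Ω ∧ ∀ j, ∀ x ∈ Metric.ball z r, ‖H j x‖ ≤ B) :
    ∃ φ : ℕ → ℕ, StrictMono φ ∧ ∃ g : E → ℂ, DifferentiableOn ℂ g Ω ∧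
      TendstoLocallyUniformlyOn (fun j => H (φ j)) g atTop Ω := by
  classical
  have := FiniteDimensional.proper ℂ E
  have hlip : ∀ z ∈ Ω, ∃ r > 0, ∃ B, 0 ≤ B ∧ Metric.ball z r ⊆ Ω ∧ ∀ j, ∀ x ∈ Metric.ball z r,
      ∀ y ∈ Metric.ball z r, dist (H j x) (H j y) ≤ B * dist x y := by
    intro z hz
    obtain ⟨r, hr, B, hrΩ, hB⟩ := hb z hz
    have e : 2 * (r / 2) = r := by ring
    have hB0 : 0 ≤ B := (norm_nonneg _).trans (hB 0 z (Metric.mem_ball_self hr))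
    refine ⟨r / 2 / 2, by positivity, 2 * B / (r / 2), by positivity,
      (Metric.ball_subset_ball (by linarith)).trans hrΩ, ?_⟩
    exact local_lip (by positivity) (fun j => (hd j).mono (by rw [e]; exact hrΩ))
      (fun j x hx => hB j x (by rwa [e] at hx))
  let d : ℕ → E := TopologicalSpace.denseSeq E
  have hdense : DenseRange d := TopologicalSpace.denseRange_denseSeq E
  have hbd : ∀ k, ∃ B, ∀ j, d k ∈ Ω → ‖H j (d k)‖ ≤ B := by
    intro k
    by_cases hk : d k ∈ Ω
    · obtain ⟨r, hr, B, _, hB⟩ := hb _ hk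
      exact ⟨B, fun j _ => hB j _ (Metric.mem_ball_self hr)⟩
    · exact ⟨0, fun j h => absurd h hk⟩
  choose B hB using hbd
  let u : ℕ → ℕ → ℂ := fun j k => if d k ∈ Ω then H j (d k) else 0
  have hcomp : IsCompact (Set.univ.pi fun k => Metric.closedBall (0:ℂ) (max (B k) 0)) :=
    isCompact_univ_pi fun k => isCompact_closedBall _ _
  obtain ⟨l, -, φ, hφ, hlim⟩ := hcomp.tendsto_subseq (x := u) (by
    intro j k _
    simp only [u]
    split_ifs with h
    · simpa using Or.inl (hB k j h)
    · simp)
  have hconv : ∀ k, d k ∈ Ω → Tendsto (fun j => H (φ j) (d k)) atTop (𝓝 (l k)) := by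
    intro k hk
    have := tendsto_pi_nhds.1 hlim k
    simpa [u, hk, Function.comp_def] using this
  have hpt : ∀ z ∈ Ω, ∃ y, Tendsto (fun j => H (φ j) z) atTop (𝓝 y) := by
    intro z hz
    apply cauchySeq_tendsto_of_complete
    obtain ⟨r, hr, L, hL0, hrΩ, hL⟩ := hlip z hz
    rw [Metric.cauchySeq_iff]
    intro ε hε
    obtain ⟨k, hk⟩ := hdense.exists_dist_lt z (ε := min r (ε / (3 * (L + 1)))) (by positivity)
    have hkr : d k ∈ Metric.ball z r := by
      rw [Metric.mem_ball, dist_comm]; exact hk.trans_le (min_le_left _ _)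
    have hke : L * dist z (d k) < ε / 3 := by
      have h1 := hk.trans_le (min_le_right _ _)
      calc L * dist z (d k) ≤ L * (ε / (3 * (L + 1))) := by gcongr
        _ < (L + 1) * (ε / (3 * (L + 1))) := by
          apply mul_lt_mul_of_pos_right (by linarith); positivity
        _ = ε / 3 := by field_simp
    obtain ⟨N, hN⟩ := Metric.cauchySeq_iff.1 (hconv k (hrΩ hkr)).cauchySeq (ε / 3) (by positivity)
    refine ⟨N, fun m hm n hn => ?_⟩
    have a1 := hL (φ m) z (Metric.mem_ball_self hr) _ hkr
    have a2 := hL (φ n) z (Metric.mem_ball_self hr) _ hkr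
    have a3 := hN m hm n hn
    have a4 := dist_triangle4 (H (φ m) z) (H (φ m) (d k)) (H (φ n) (d k)) (H (φ n) z)
    rw [dist_comm (H (φ n) (d k))] at a4
    linarith
  choose! g hg using hpt
  have hlu : TendstoLocallyUniformlyOn (fun j => H (φ j)) g atTop Ω := by
    rw [Metric.tendstoLocallyUniformlyOn_iff]
    intro ε hε z hz
    obtain ⟨r, hr, L, hL0, hrΩ, hL⟩ := hlip z hz
    set δ := min r (ε / (3 * (L + 1))) with hδ
    have hδ0 : 0 < δ := by positivity
    refine ⟨Metric.ball z δ, mem_nhdsWithin_of_mem_nhds (Metric.ball_mem_nhds _ hδ0), ?_⟩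
    filter_upwards [Metric.tendsto_nhds.1 (hg z hz) (ε / 3) (by positivity)] with j hj y hy
    have hyr : y ∈ Metric.ball z r := Metric.ball_subset_ball (min_le_left _ _) hy
    have hke : L * dist y z < ε / 3 := by
      have h1 : dist y z < ε / (3 * (L + 1)) := lt_of_lt_of_le hy (min_le_right _ _)
      calc L * dist y z ≤ L * (ε / (3 * (L + 1))) := by gcongr
        _ < (L + 1) * (ε / (3 * (L + 1))) := by
          apply mul_lt_mul_of_pos_right (by linarith); positivity
        _ = ε / 3 := by field_simp
    have a1 := hL (φ j) y hyr z (Metric.mem_ball_self hr)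
    have a2 : dist (g y) (g z) ≤ L * dist y z :=
      le_of_tendsto ((hg y (hrΩ hyr)).dist (hg z hz))
        (Eventually.of_forall fun i => hL (φ i) y hyr z (Metric.mem_ball_self hr))
    have a4 := dist_triangle4 (g y) (g z) (H (φ j) z) (H (φ j) y)
    rw [dist_comm (H (φ j) z) (H (φ j) y), dist_comm (g z)] at a4
    linarith
  exact ⟨φ, hφ, g, differentiableOn_of_locallyUniform hΩ (fun j => hd (φ j)) hlu, hlu⟩

lemma propagate {E : Type} [NormedAddCommGroup E]
    {Ω : Set E} (hΩ : IsPreconnected Ω) (P : E → Prop)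
    (hP : ∀ z ∈ Ω, ∃ r > 0, Metric.ball z r ⊆ Ω ∧
      ∀ x ∈ Metric.ball z r, ∀ y ∈ Metric.ball z r, P x → P y)
    {z0 : E} (hz0 : z0 ∈ Ω) (h0 : P z0) : ∀ z ∈ Ω, P z := by
  have hopen : IsOpen {z | z ∈ Ω ∧ P z} := by
    rw [Metric.isOpen_iff]
    rintro z ⟨hz, hp⟩
    obtain ⟨r, hr, hrΩ, h⟩ := hP z hz
    exact ⟨r, hr, fun y hy => ⟨hrΩ hy, h z (Metric.mem_ball_self hr) y hy hp⟩⟩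
  have := hΩ.subset_of_closure_inter_subset hopen ⟨z0, hz0, hz0, h0⟩ (by
    rintro z ⟨hzc, hz⟩
    obtain ⟨r, hr, hrΩ, h⟩ := hP z hz
    obtain ⟨x, hx, hxd⟩ := Metric.mem_closure_iff.1 hzc r hr
    exact ⟨hz, h x (by rwa [Metric.mem_ball, dist_comm]) z (Metric.mem_ball_self hr) hx.2⟩)
  exact fun z hz => (this hz).2


lemma harnack {E : Type} [NormedAddCommGroup E] [NormedSpace ℂ E]
    {Ω : Set E} (hΩ : IsOpen Ω) {h : ℕ → E → ℂ} (hd : ∀ j, DifferentiableOn ℂ (h j) Ω)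
    (h0 : ∀ j, ∀ z ∈ Ω, h j z ≠ 0) (h1 : ∀ j, ∀ z ∈ Ω, h j z ≠ 1) :
    ∀ z ∈ Ω, ∃ r > 0, Metric.ball z r ⊆ Ω ∧ ∀ M : ℝ, ∃ C : ℝ, ∀ j,
      ∀ x ∈ Metric.ball z r, ∀ y ∈ Metric.ball z r, ‖h j x‖ ≤ M → ‖h j y‖ ≤ C := by
  intro z hz
  obtain ⟨R, hR, hRΩ⟩ := Metric.isOpen_iff.1 hΩ z hz
  refine ⟨R / 8, by positivity, (Metric.ball_subset_ball (by linarith)).trans hRΩ, fun M => ?_⟩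
  obtain ⟨C, hC⟩ := schottky (E := E) M
  refine ⟨C, fun j x hx y hy hM => ?_⟩
  rw [Metric.mem_ball] at hx hy
  have hsub : Metric.ball x (R / 2) ⊆ Ω :=
    (Metric.ball_subset_ball' (by linarith)).trans hRΩ
  refine hC (h j) x (R / 2) ((hd j).mono hsub) (fun w hw => h0 j w (hsub hw))
    (fun w hw => h1 j w (hsub hw)) hM y ?_
  rw [Metric.mem_ball]
  have := dist_triangle_right y x z
  linarith

/-- Montel's fundamental normality test for functions omitting `0` and `1`. -/
lemma montel_omit {E : Type} [NormedAddCommGroup E] [NormedSpace ℂ E] [FiniteDimensional ℂ E]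
    {Ω : Set E} (hΩ : IsOpen Ω) (hconn : IsConnected Ω) {h : ℕ → E → ℂ}
    (hd : ∀ j, DifferentiableOn ℂ (h j) Ω)
    (h0 : ∀ j, ∀ z ∈ Ω, h j z ≠ 0) (h1 : ∀ j, ∀ z ∈ Ω, h j z ≠ 1) :
    ∃ φ : ℕ → ℕ, StrictMono φ ∧
      ((∃ g : E → ℂ, DifferentiableOn ℂ g Ω ∧
        TendstoLocallyUniformlyOn (fun j => h (φ j)) g atTop Ω) ∨
       (∀ K, K ⊆ Ω → IsCompact K → ∀ M : ℝ, ∃ N, ∀ j ≥ N, ∀ z ∈ K, M < ‖h (φ j) z‖)) := by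
  obtain ⟨z0, hz0⟩ := hconn.nonempty
  have hh := harnack hΩ hd h0 h1
  by_cases hinf : Tendsto (fun j => ‖h j z0‖) atTop atTop
  · refine ⟨id, strictMono_id, Or.inr ?_⟩
    have hall := propagate hconn.isPreconnected
      (fun z => Tendsto (fun j => ‖h j z‖) atTop atTop) (by
        intro z hz
        obtain ⟨r, hr, hrΩ, H⟩ := hh z hz
        refine ⟨r, hr, hrΩ, fun x hx y hy hxt => ?_⟩
        rw [tendsto_atTop]
        intro M
        obtain ⟨C, hC⟩ := H M
        filter_upwards [hxt.eventually_gt_atTop C] with j hj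
        by_contra! hcon
        exact absurd (hC j y hy x hx hcon.le) (not_le.2 hj)) hz0 hinf
    intro K hKΩ hK M
    refine hK.induction_on (p := fun s => ∃ N, ∀ j ≥ N, ∀ z ∈ s, M < ‖h (id j) z‖)
      ⟨0, by simp⟩ ?_ ?_ ?_
    · rintro s t hst ⟨N, hN⟩
      exact ⟨N, fun j hj z hz => hN j hj z (hst hz)⟩
    · rintro s t ⟨N, hN⟩ ⟨N', hN'⟩
      refine ⟨max N N', fun j hj z hz => ?_⟩
      rcases hz with hz | hz
      · exact hN j (le_trans (le_max_left _ _) hj) z hz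
      · exact hN' j (le_trans (le_max_right _ _) hj) z hz
    · intro z hz
      obtain ⟨r, hr, hrΩ, H⟩ := hh z (hKΩ hz)
      obtain ⟨C, hC⟩ := H M
      obtain ⟨N, hN⟩ := eventually_atTop.1 ((hall z (hKΩ hz)).eventually_gt_atTop C)
      refine ⟨Metric.ball z r, mem_nhdsWithin_of_mem_nhds (Metric.ball_mem_nhds _ hr), N,
        fun j hj y hy => ?_⟩
      by_contra! hcon
      exact absurd (hC j y hy z (Metric.mem_ball_self hr) hcon) (not_le.2 (hN j hj))
  · obtain ⟨M, hM⟩ : ∃ M : ℝ, ∃ᶠ j in atTop, ‖h j z0‖ ≤ M := by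
      rw [tendsto_atTop] at hinf
      push Not at hinf
      obtain ⟨M, hM⟩ := hinf
      exact ⟨M, hM.mono fun j hj => hj.le⟩
    obtain ⟨ψ, hψ, hψM⟩ := extraction_of_frequently_atTop hM
    have hall := propagate hconn.isPreconnected
      (fun z => ∃ C, ∀ j, ‖h (ψ j) z‖ ≤ C) (by
        intro z hz
        obtain ⟨r, hr, hrΩ, H⟩ := hh z hz
        refine ⟨r, hr, hrΩ, fun x hx y hy ⟨C, hC⟩ => ?_⟩
        obtain ⟨C', hC'⟩ := H C
        exact ⟨C', fun j => hC' _ x hx y hy (hC j)⟩) hz0 ⟨M, hψM⟩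
    obtain ⟨φ, hφ, g, hg, hlu⟩ := montel_bounded hΩ (H := fun j => h (ψ j)) (fun j => hd _) (by
      intro z hz
      obtain ⟨r, hr, hrΩ, H⟩ := hh z hz
      obtain ⟨C, hC⟩ := hall z hz
      obtain ⟨C', hC'⟩ := H C
      exact ⟨r, hr, C', hrΩ, fun j x hx => hC' _ z (Metric.mem_ball_self hr) x hx (hC j)⟩)
    exact ⟨fun j => ψ (φ j), hψ.comp hφ, Or.inl ⟨g, hg, hlu⟩⟩

lemma chordal_le_dist (a b : ℂ) : chordal a b ≤ dist a b := by
  unfold chordal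
  apply div_le_self dist_nonneg
  have h1 : 1 ≤ Real.sqrt (1 + ‖a‖^2) := Real.one_le_sqrt.2 (by nlinarith [sq_nonneg ‖a‖])
  have h2 : 1 ≤ Real.sqrt (1 + ‖b‖^2) := Real.one_le_sqrt.2 (by nlinarith [sq_nonneg ‖b‖])
  nlinarith

/-- Fatou's normality theorem in ℂⁿ. -/
theorem stmt9 {n : ℕ} {Ω : Set (Cn n)} (hΩ : IsOpen Ω) (hconn : IsConnected Ω)
    (a b : Cn n → ℂ) (ha : DifferentiableOn ℂ a Ω) (hb : DifferentiableOn ℂ b Ω)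
    (hab : ∀ z ∈ Ω, a z ≠ b z)
    (F : Set (Cn n → ℂ)) (hhol : ∀ f ∈ F, DifferentiableOn ℂ f Ω)
    (hom : ∀ f ∈ F, ∀ z ∈ Ω, f z ≠ a z ∧ f z ≠ b z) :
    IsNormalFamily Ω F := by
  intro s hs
  have hne : ∀ z ∈ Ω, a z - b z ≠ 0 := fun z hz => sub_ne_zero.2 (hab z hz)
  have hrec : ∀ j, ∀ z ∈ Ω, s j z = b z + (a z - b z) * ((s j z - b z) / (a z - b z)) := by
    intro j z hz
    rw [mul_div_cancel₀ _ (hne z hz)]; ring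
  obtain ⟨φ, hφ, H⟩ := montel_omit hΩ hconn (h := fun j z => (s j z - b z) / (a z - b z))
    (fun j => by
      simp only [div_eq_mul_inv]
      exact ((hhol _ (hs j)).fun_sub hb).fun_mul ((ha.fun_sub hb).fun_inv hne))
    (fun j z hz => div_ne_zero (sub_ne_zero.2 (hom _ (hs j) z hz).2) (hne z hz))
    (fun j z hz h => (hom _ (hs j) z hz).1 (by
      rw [div_eq_one_iff_eq (hne z hz)] at h
      linear_combination h))
  refine ⟨φ, hφ, ?_⟩
  have hca := ha.continuousOn
  have hcb := hb.continuousOn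
  rcases H with ⟨g, hg, hlu⟩ | hinf
  · refine Or.inl ⟨fun z => b z + (a z - b z) * g z,
      hb.fun_add ((ha.fun_sub hb).fun_mul hg), fun K hKΩ hK ε hε => ?_⟩
    have := FiniteDimensional.proper ℂ (Cn n)
    have hu := (tendstoLocallyUniformlyOn_iff_forall_isCompact hΩ).1 hlu K hKΩ hK
    obtain ⟨B, hB⟩ := hK.exists_bound_of_continuousOn ((hca.fun_sub hcb).mono hKΩ)
    rw [Metric.tendstoUniformlyOn_iff] at hu
    obtain ⟨N, hN⟩ := eventually_atTop.1 (hu (ε / (|B| + 1)) (by positivity))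
    refine ⟨N, fun j hj z hz => (chordal_le_dist _ _).trans_lt ?_⟩
    have h1 := hN j hj z hz
    rw [hrec (φ j) z (hKΩ hz), dist_add_left, dist_eq_norm, ← mul_sub, norm_mul]
    rw [dist_comm, dist_eq_norm] at h1
    calc _ ≤ |B| * (ε / (|B| + 1)) :=
          mul_le_mul ((hB z hz).trans (le_abs_self B)) h1.le (norm_nonneg _) (abs_nonneg _)
      _ < (|B| + 1) * (ε / (|B| + 1)) := by
          apply mul_lt_mul_of_pos_right (by linarith); positivity
      _ = ε := by field_simp
  · refine Or.inr fun K hKΩ hK M => ?_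
    obtain ⟨B, hB⟩ := hK.exists_bound_of_continuousOn (hcb.mono hKΩ)
    obtain ⟨D, hD⟩ := hK.exists_bound_of_continuousOn
      (((hca.fun_sub hcb).mono hKΩ).inv₀ (fun z hz => hne z (hKΩ hz)))
    obtain ⟨N, hN⟩ := hinf K hKΩ hK ((|M| + B) * D)
    refine ⟨N, fun j hj z hz => ?_⟩
    have h1 := hN j hj z hz
    by_contra! hcon
    refine absurd h1 (not_lt.2 ?_)
    rw [div_eq_mul_inv, norm_mul]
    have hcon' := hcon.trans (le_abs_self M)
    have hBz := hB z hz
    exact mul_le_mul ((norm_sub_le _ _).trans (add_le_add hcon' hBz)) (hD z hz) (norm_nonneg _)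
      (by linarith [abs_nonneg M, norm_nonneg (b z)])
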